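/- There is a constant C ≥ 0 such that for every precision p ≥ 6, every symmetric round-to-nearest function RN, and all x_h, x_l, y_h, y_l ∈ F_p with RN(x_h + x_l) = x_h, RN(y_h + y_l) = y_h, x_h·y_h < 0 and min(|x_h|, |y_h|) ≤ max(|x_h|, |y_h|)/2 (i.e. r(x_h, y_h) ≤ 1/2), the output of sloppy double-word addition with rounding RN satisfies |z_h + z_l − S| ≤ (3u² + C·u³)·|S|, where u = 2^(−p) and S = x_h + x_l + y_h + y_l. -/

import Mathlib

/-!
TwoSum and FastTwoSum are exact. Hence, with `z = x_h + y_h` and `q = x_l + y_l`, the two output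
words add up to `RN z + w`, where `w = RN (z - RN z + v)` and `v = RN q`, and the only errors are
those of the roundings `v` and `w`. This expression is symmetric in the operands, so let
`|y_h| ≤ |x_h|`, and let `t` be the power of two with `t ≤ |x_h| < 2 * t`. We count errors in
units of `u ^ 2 * t` and compare them with `3 * |z| / t`.

* If `t ≤ |z|`, then `v` and `w` contribute at most `1` and `2`.
* If `|z| < t`, there is cancellation, so `|y_h| ≤ |x_h| / 2` and `t / 2 ≤ |z|`; both `v` and `w`
  contribute at most `1`. If `|y_h| < t / 4`, this suffices since `3 * t / 4 ≤ |z|`. If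
  `t / 4 ≤ |y_h|`, then `z` lies on the grid of multiples of `2 * t * u ^ 2`. Either
  `|q| ≤ t * u`, and `v` contributes only `1 / 2`; or `v` lies on the same grid, hence
  `z - RN z + v` is a float and `w` is exact. Both times the total is at most `3 / 2`.

So the error is at most `3 * u ^ 2 * |z|`. As `|q| ≤ 3 * u * |z|`, replacing `|z|` by `|S|` costs a
factor `1 / (1 - 3 * u) ≤ 1 + 12 * u`, whence the constant `36 = 3 * 12`.
-/

/-- The radix-2, precision-`p` floating-point numbers with unlimited exponent range. -/
def Fp (p : ℕ) : Set ℝ := {x : ℝ | ∃ M e : ℤ, |M| ≤ 2 ^ p - 1 ∧ x = (M : ℝ) * (2 : ℝ) ^ e}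

/-- Round toward `-∞`: the largest floating-point number `≤ x`. -/
noncomputable def RD (p : ℕ) (x : ℝ) : ℝ := sSup {f : ℝ | f ∈ Fp p ∧ f ≤ x}

/-- Round toward `+∞`: the smallest floating-point number `≥ x`. -/
noncomputable def RU (p : ℕ) (x : ℝ) : ℝ := sInf {f : ℝ | f ∈ Fp p ∧ x ≤ f}

/-- `y` is a faithful rounding of `x`. -/
def Faithful (p : ℕ) (x y : ℝ) : Prop := y = RD p x ∨ y = RU p x

/-- `RN` is a round-to-nearest function for precision `p`. -/
def IsRN (p : ℕ) (RN : ℝ → ℝ) : Prop :=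
  (∀ x : ℝ, RN x ∈ Fp p) ∧ ∀ x f : ℝ, f ∈ Fp p → |RN x - x| ≤ |f - x|

/-- `RN` is symmetric. -/
def SymRN (RN : ℝ → ℝ) : Prop := ∀ x : ℝ, RN (-x) = -RN x

/-- Sloppy double-word addition with rounding function `R`. -/
noncomputable def sloppyAdd (R : ℝ → ℝ) (xh xl yh yl : ℝ) : ℝ × ℝ :=
  let sh := R (xh + yh)
  let a' := R (sh - yh)
  let b' := R (sh - a')
  let sl := R (R (xh - a') + R (yh - b'))
  let v := R (xl + yl)
  let w := R (sl + v)
  let zh := R (sh + w)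
  let d := R (zh - sh)
  let zl := R (w - d)
  (zh, zl)

open AddSubgroup (zmultiples)

/-! ### Powers of two and binades -/

/-- The integer powers of two: the boundaries of the binades, and the spacings of the
floating-point numbers inside them. -/
def IsPowTwo (t : ℝ) : Prop := ∃ k : ℤ, t = 2 ^ k

/-- The unit roundoff `u = 2 ^ (-p)`, half the spacing of `Fp p` in the binade `[1, 2)`. -/
noncomputable def unitRoundoff (p : ℕ) : ℝ := 2 ^ (-(p : ℤ))

namespace IsPowTwo

variable {s t : ℝ}

lemma pos (ht : IsPowTwo t) : 0 < t := by
  obtain ⟨k, rfl⟩ := ht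
  positivity

lemma two : IsPowTwo 2 := ⟨1, by norm_num⟩

lemma mul (hs : IsPowTwo s) (ht : IsPowTwo t) : IsPowTwo (s * t) := by
  obtain ⟨k, rfl⟩ := hs
  obtain ⟨l, rfl⟩ := ht
  exact ⟨k + l, (zpow_add₀ two_ne_zero k l).symm⟩

lemma div (hs : IsPowTwo s) (ht : IsPowTwo t) : IsPowTwo (s / t) := by
  obtain ⟨k, rfl⟩ := hs
  obtain ⟨l, rfl⟩ := ht
  exact ⟨k - l, (zpow_sub₀ two_ne_zero k l).symm⟩

lemma two_mul (ht : IsPowTwo t) : IsPowTwo (2 * t) := two.mul ht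

lemma half (ht : IsPowTwo t) : IsPowTwo (t / 2) := ht.div two

lemma le_of_lt_two_mul (hs : IsPowTwo s) (ht : IsPowTwo t) (h : s < 2 * t) : s ≤ t := by
  obtain ⟨k, rfl⟩ := hs
  obtain ⟨l, rfl⟩ := ht
  rw [← zpow_one_add₀ two_ne_zero, zpow_lt_zpow_iff_right₀ one_lt_two] at h
  exact zpow_le_zpow_right₀ one_le_two (by omega)

lemma zmultiples_le_zmultiples (hs : IsPowTwo s) (ht : IsPowTwo t) (hst : s ≤ t) :
    zmultiples t ≤ zmultiples s := by
  obtain ⟨k, rfl⟩ := hs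
  obtain ⟨l, rfl⟩ := ht
  have hkl : k ≤ l := (zpow_le_zpow_iff_right₀ one_lt_two).1 hst
  obtain ⟨n, rfl⟩ := Int.le.dest hkl
  refine AddSubgroup.zmultiples_le.2 (AddSubgroup.mem_zmultiples_iff.2 ⟨2 ^ n, ?_⟩)
  rw [zpow_add₀ two_ne_zero, zsmul_eq_mul, zpow_natCast, mul_comm]
  push_cast
  rfl

end IsPowTwo

lemma exists_isPowTwo_le_abs_lt {x : ℝ} (hx : x ≠ 0) :
    ∃ t, IsPowTwo t ∧ t ≤ |x| ∧ |x| < 2 * t := by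
  obtain ⟨k, hle, hlt⟩ := exists_mem_Ico_zpow (abs_pos.2 hx) (one_lt_two : (1 : ℝ) < 2)
  refine ⟨2 ^ k, ⟨k, rfl⟩, hle, ?_⟩
  rwa [← zpow_one_add₀ two_ne_zero, add_comm]

lemma unitRoundoff_mul_two_pow (p : ℕ) : unitRoundoff p * 2 ^ p = 1 := by
  rw [unitRoundoff, zpow_neg, zpow_natCast, inv_mul_cancel₀ (by positivity)]

lemma isPowTwo_unitRoundoff (p : ℕ) : IsPowTwo (unitRoundoff p) := ⟨_, rfl⟩

lemma unitRoundoff_pos (p : ℕ) : 0 < unitRoundoff p := (isPowTwo_unitRoundoff p).pos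

variable {p : ℕ}

lemma unitRoundoff_le_quarter (hp : 2 ≤ p) : unitRoundoff p ≤ 1 / 4 := by
  have h : unitRoundoff p ≤ 2 ^ (-2 : ℤ) := zpow_le_zpow_right₀ one_le_two (by omega)
  exact h.trans (by norm_num)

lemma IsPowTwo.mul_unitRoundoff {t : ℝ} (ht : IsPowTwo t) (p : ℕ) :
    IsPowTwo (t * unitRoundoff p) :=
  ht.mul (isPowTwo_unitRoundoff p)

/-! ### Floating-point numbers -/

namespace Fp

variable {g t x y : ℝ}

lemma zero_mem (p : ℕ) : (0 : ℝ) ∈ Fp p :=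
  ⟨0, 0, by simpa using one_le_pow₀ (one_le_two : (1 : ℤ) ≤ 2), by simp⟩

lemma neg_mem (hx : x ∈ Fp p) : -x ∈ Fp p := by
  obtain ⟨M, e, hM, rfl⟩ := hx
  exact ⟨-M, e, by simpa using hM, by push_cast; ring⟩

lemma abs_mem (hx : x ∈ Fp p) : |x| ∈ Fp p := by
  rcases abs_choice x with h | h <;> rw [h]
  exacts [hx, neg_mem hx]

lemma mul_mem (ht : IsPowTwo t) (hx : x ∈ Fp p) : t * x ∈ Fp p := by
  obtain ⟨M, e, hM, rfl⟩ := hx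
  obtain ⟨k, rfl⟩ := ht
  exact ⟨M, k + e, hM, by rw [zpow_add₀ two_ne_zero]; ring⟩

lemma isPowTwo_mem (hp : 1 ≤ p) (ht : IsPowTwo t) : t ∈ Fp p := by
  obtain ⟨k, rfl⟩ := ht
  have : (2 : ℤ) ^ 1 ≤ 2 ^ p := pow_le_pow_right₀ one_le_two hp
  exact ⟨1, k, by rw [abs_one]; linarith, by simp⟩

lemma mem_of_mem_zmultiples (hp : 1 ≤ p) (hg : IsPowTwo g) (hx : x ∈ zmultiples g)
    (hle : |x| * unitRoundoff p ≤ g) : x ∈ Fp p := by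
  obtain ⟨M, rfl⟩ := AddSubgroup.mem_zmultiples_iff.1 hx
  rw [zsmul_eq_mul] at hle ⊢
  have hM : |M| ≤ 2 ^ p := by
    have hu := unitRoundoff_pos p
    rw [abs_mul, abs_of_pos hg.pos, mul_right_comm, mul_le_iff_le_one_left hg.pos,
      ← unitRoundoff_mul_two_pow p, mul_comm, mul_le_mul_iff_right₀ hu] at hle
    exact_mod_cast hle
  rcases hM.lt_or_eq with hlt | heq
  · obtain ⟨k, rfl⟩ := hg
    exact ⟨M, k, Int.le_sub_one_of_lt hlt, rfl⟩
  · -- The significand `± 2 ^ p` is out of range, but the number is a power of two up to sign.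
    have hmem : (2 : ℝ) ^ p * g ∈ Fp p := isPowTwo_mem hp (IsPowTwo.mul ⟨p, by simp⟩ hg)
    rcases (abs_eq (by positivity)).1 heq with h | h
    · simpa [h] using hmem
    · simpa [h] using neg_mem hmem

lemma mem_zmultiples_of_le_abs (ht : IsPowTwo t) (hx : x ∈ Fp p) (hle : t ≤ |x|) :
    x ∈ zmultiples (2 * t * unitRoundoff p) := by
  obtain ⟨M, e, hM, rfl⟩ := hx
  have he : IsPowTwo (2 ^ e) := ⟨e, rfl⟩
  refine IsPowTwo.zmultiples_le_zmultiples (ht.two_mul.mul_unitRoundoff p) he ?_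
    (AddSubgroup.mem_zmultiples_iff.2 ⟨M, zsmul_eq_mul _ _⟩)
  refine (ht.two_mul.mul_unitRoundoff p).le_of_lt_two_mul he ?_
  have hM' : |(M : ℝ)| < 2 ^ p := by exact_mod_cast Int.lt_of_le_sub_one hM
  calc 2 * t * unitRoundoff p ≤ 2 * |M * (2 : ℝ) ^ e| * unitRoundoff p := by
        have := unitRoundoff_pos p
        gcongr
    _ = |(M : ℝ)| * (2 * 2 ^ e * unitRoundoff p) := by
        rw [abs_mul, abs_of_pos he.pos]
        ring
    _ < 2 ^ p * (2 * 2 ^ e * unitRoundoff p) :=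
        mul_lt_mul_of_pos_right hM' (he.two_mul.mul_unitRoundoff p).pos
    _ = 2 * 2 ^ e := by linear_combination 2 * 2 ^ e * unitRoundoff_mul_two_pow p

lemma exists_grid (p : ℕ) (hx : x ≠ 0) :
    ∃ g, IsPowTwo g ∧ |x| * unitRoundoff p ≤ g ∧
      ∀ y ∈ Fp p, |x| ≤ |y| → y ∈ zmultiples g := by
  obtain ⟨t, ht, hle, hlt⟩ := exists_isPowTwo_le_abs_lt hx
  have hu := unitRoundoff_pos p
  exact ⟨2 * t * unitRoundoff p, ht.two_mul.mul_unitRoundoff p, by gcongr,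
    fun y hy hxy => mem_zmultiples_of_le_abs ht hy (hle.trans hxy)⟩

-- Sterbenz's lemma
lemma sub_mem_of_abs_sub_le (hp : 1 ≤ p) (hx : x ∈ Fp p) (hy : y ∈ Fp p)
    (hxle : |x - y| ≤ |x|) (hyle : |x - y| ≤ |y|) : x - y ∈ Fp p := by
  wlog hxy : |x| ≤ |y| generalizing x y
  · rw [← neg_sub]
    rw [abs_sub_comm] at hxle hyle
    exact neg_mem (this hy hx hyle hxle (le_of_not_ge hxy))
  rcases eq_or_ne x 0 with rfl | hx0
  · rw [abs_nonpos_iff.1 (hxle.trans_eq abs_zero)]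
    exact zero_mem p
  obtain ⟨g, hg, hxg, hgrid⟩ := exists_grid p hx0
  have hu := unitRoundoff_pos p
  exact mem_of_mem_zmultiples hp hg (sub_mem (hgrid x hx le_rfl) (hgrid y hy hxy))
    (le_trans (by gcongr) hxg)

lemma exists_mem_abs_sub_le (hp : 1 ≤ p) (ht : IsPowTwo t) (hx : |x| ≤ t) :
    ∃ f ∈ Fp p, |f - x| ≤ t * unitRoundoff p / 2 := by
  have hg : IsPowTwo (t * unitRoundoff p) := ht.mul_unitRoundoff p
  set g := t * unitRoundoff p with hg_def
  have ht_eq : 2 ^ p * g = t := by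
    linear_combination 2 ^ p * hg_def + t * unitRoundoff_mul_two_pow p
  set m : ℤ := round (x / g)
  have hround : |m - x / g| ≤ 1 / 2 := abs_sub_comm (m : ℝ) _ ▸ abs_sub_round (x / g)
  have hm : |m| ≤ 2 ^ p := by
    have hxg : |x / g| ≤ 2 ^ p := by rwa [abs_div, abs_of_pos hg.pos, div_le_iff₀ hg.pos, ht_eq]
    have : |(m : ℝ)| < 2 ^ p + 1 := by
      linarith [abs_sub_abs_le_abs_sub (m : ℝ) (x / g)]
    exact Int.lt_add_one_iff.1 (by exact_mod_cast this)
  refine ⟨m * g, mem_of_mem_zmultiples hp hg ⟨m, zsmul_eq_mul _ _⟩ ?_, ?_⟩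
  · have hm' : |(m : ℝ)| ≤ 2 ^ p := by exact_mod_cast hm
    have hu := unitRoundoff_pos p
    rw [abs_mul, abs_of_pos hg.pos]
    calc |(m : ℝ)| * g * unitRoundoff p ≤ 2 ^ p * g * unitRoundoff p := by
          gcongr
          exact hg.pos.le
      _ = g := by rw [ht_eq]
  · calc |m * g - x| = |m - x / g| * g := by
          rw [← abs_of_pos hg.pos, ← abs_mul, abs_of_pos hg.pos, sub_mul,
            div_mul_cancel₀ _ hg.pos.ne']
      _ ≤ 1 / 2 * g := mul_le_mul_of_nonneg_right hround hg.pos.le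
      _ = g / 2 := by ring

end Fp

/-! ### Rounding to nearest -/

namespace IsRN

variable {RN : ℝ → ℝ} {f g t x : ℝ}

lemma mem (h : IsRN p RN) (x : ℝ) : RN x ∈ Fp p := h.1 x

lemma abs_sub_le_abs_sub (h : IsRN p RN) (hf : f ∈ Fp p) (x : ℝ) : |RN x - x| ≤ |f - x| :=
  h.2 x f hf

lemma eq_self (h : IsRN p RN) (hx : x ∈ Fp p) : RN x = x := by
  simpa [sub_eq_zero] using h.abs_sub_le_abs_sub hx x

lemma apply_zero (h : IsRN p RN) : RN 0 = 0 := h.eq_self (Fp.zero_mem p)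

lemma le_apply (h : IsRN p RN) (hf : f ∈ Fp p) (hfx : f ≤ x) : f ≤ RN x := by
  have := h.abs_sub_le_abs_sub hf x
  rw [abs_of_nonpos (sub_nonpos.2 hfx)] at this
  linarith [neg_le_abs (RN x - x)]

lemma apply_le (h : IsRN p RN) (hf : f ∈ Fp p) (hxf : x ≤ f) : RN x ≤ f := by
  have := h.abs_sub_le_abs_sub hf x
  rw [abs_of_nonneg (sub_nonneg.2 hxf)] at this
  linarith [le_abs_self (RN x - x)]

lemma abs_apply_le (h : IsRN p RN) (hf : f ∈ Fp p) (hxf : |x| ≤ f) : |RN x| ≤ f :=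
  abs_le.2 ⟨h.le_apply (Fp.neg_mem hf) (abs_le.1 hxf).1, h.apply_le hf (abs_le.1 hxf).2⟩

lemma le_abs_apply (h : IsRN p RN) (hf : f ∈ Fp p) (hfx : f ≤ |x|) : f ≤ |RN x| := by
  rcases le_abs.1 hfx with hx | hx
  · exact (h.le_apply hf hx).trans (le_abs_self _)
  · exact (le_neg_of_le_neg (h.apply_le (Fp.neg_mem hf) (le_neg_of_le_neg hx))).trans
      (neg_le_abs _)

lemma abs_sub_le (h : IsRN p RN) (hp : 1 ≤ p) (ht : IsPowTwo t) (hx : |x| ≤ t) :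
    |RN x - x| ≤ t * unitRoundoff p / 2 := by
  obtain ⟨f, hf, hle⟩ := Fp.exists_mem_abs_sub_le hp ht hx
  exact (h.abs_sub_le_abs_sub hf x).trans hle

lemma abs_sub_le_abs_mul (h : IsRN p RN) (hp : 1 ≤ p) (x : ℝ) :
    |RN x - x| ≤ |x| * unitRoundoff p := by
  rcases eq_or_ne x 0 with rfl | hx
  · simp [h.apply_zero]
  obtain ⟨t, ht, hle, hlt⟩ := exists_isPowTwo_le_abs_lt hx
  have hu := unitRoundoff_pos p
  calc |RN x - x| ≤ 2 * t * unitRoundoff p / 2 := h.abs_sub_le hp ht.two_mul hlt.le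
    _ = t * unitRoundoff p := by ring
    _ ≤ |x| * unitRoundoff p := by gcongr

lemma eq_zero_of_apply_eq_zero (h : IsRN p RN) (hp : 1 ≤ p) (hx : RN x = 0) : x = 0 := by
  by_contra hx0
  obtain ⟨t, ht, hle, -⟩ := exists_isPowTwo_le_abs_lt hx0
  have := h.le_abs_apply (Fp.isPowTwo_mem hp ht) hle
  rw [hx, abs_zero] at this
  exact this.not_gt ht.pos

lemma apply_mem_zmultiples (h : IsRN p RN) (hp : 1 ≤ p) (hg : IsPowTwo g)
    (hx : x ∈ zmultiples g) : RN x ∈ zmultiples g := by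
  rcases le_or_gt (|x| * unitRoundoff p) g with hle | hlt
  · rwa [h.eq_self (Fp.mem_of_mem_zmultiples hp hg hx hle)]
  have hu := unitRoundoff_pos p
  have ht : IsPowTwo (g / unitRoundoff p) := hg.div (isPowTwo_unitRoundoff p)
  have hRN := Fp.mem_zmultiples_of_le_abs ht (h.mem x)
    (h.le_abs_apply (Fp.isPowTwo_mem hp ht) ((div_le_iff₀ hu).2 hlt.le))
  rw [mul_assoc, div_mul_cancel₀ _ hu.ne'] at hRN
  exact IsPowTwo.zmultiples_le_zmultiples hg hg.two_mul (by linarith [hg.pos]) hRN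

end IsRN

/-! ### Error-free transformations -/

/-- The low word computed by the FastTwoSum algorithm, which is meant for `|y| ≤ |x|`; the high
word is `RN (x + y)`. -/
noncomputable def fastTwoSumLow (RN : ℝ → ℝ) (x y : ℝ) : ℝ := RN (y - RN (RN (x + y) - x))

/-- The low word computed by the TwoSum algorithm; the high word is `RN (x + y)`. -/
noncomputable def twoSumLow (RN : ℝ → ℝ) (x y : ℝ) : ℝ :=
  let s := RN (x + y)
  let a := RN (s - y)
  let b := RN (s - a)
  RN (RN (x - a) + RN (y - b))

namespace IsRN

variable {RN : ℝ → ℝ} {x y z : ℝ}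

lemma add_sub_apply_mem (h : IsRN p RN) (hp : 1 ≤ p) (hx : x ∈ Fp p) (hy : y ∈ Fp p) :
    x + y - RN (x + y) ∈ Fp p := by
  wlog hyx : |y| ≤ |x| generalizing x y
  · rw [add_comm]
    exact this hy hx (le_of_not_ge hyx)
  rcases eq_or_ne y 0 with rfl | hy0
  · simpa [h.eq_self hx] using Fp.zero_mem p
  obtain ⟨g, hg, hyg, hgrid⟩ := Fp.exists_grid p hy0
  have hsum : x + y ∈ zmultiples g := add_mem (hgrid x hx hyx) (hgrid y hy le_rfl)
  refine Fp.mem_of_mem_zmultiples hp hg (sub_mem hsum (h.apply_mem_zmultiples hp hg hsum)) ?_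
  have hle : |x + y - RN (x + y)| ≤ |y| := by
    simpa [abs_sub_comm] using h.abs_sub_le_abs_sub hx (x + y)
  have hu := unitRoundoff_pos p
  exact le_trans (by gcongr) hyg

-- The range allowed by Sterbenz's lemma is bounded by `x / 2` and `2 * x`, hence stable under `RN`.
lemma apply_sub_mem_of_abs_sub_le (h : IsRN p RN) (hp : 1 ≤ p) (hx : x ∈ Fp p)
    (hxle : |z - x| ≤ |x|) (hzle : |z - x| ≤ |z|) : RN z - x ∈ Fp p := by
  have hdouble : 2 * x ∈ Fp p := Fp.mul_mem .two hx
  have hhalf : x / 2 ∈ Fp p := by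
    have := Fp.mul_mem (IsPowTwo.half (t := 1) ⟨0, by simp⟩) hx
    rwa [one_div_mul_eq_div] at this
  suffices |RN z - x| ≤ |x| ∧ |RN z - x| ≤ |RN z| from
    Fp.sub_mem_of_abs_sub_le hp (h.mem z) hx this.2 this.1
  rcases le_total 0 x with hx0 | hx0
  · rw [abs_of_nonneg hx0] at hxle ⊢
    have hz0 : 0 ≤ z := by linarith [(abs_le.1 hxle).1]
    rw [abs_of_nonneg hz0] at hzle
    have hlo : x / 2 ≤ RN z := h.le_apply hhalf (by linarith [(abs_le.1 hzle).1])
    have hhi : RN z ≤ 2 * x := h.apply_le hdouble (by linarith [(abs_le.1 hxle).2])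
    rw [abs_of_nonneg (by linarith : 0 ≤ RN z)]
    constructor <;> rw [abs_le] <;> constructor <;> linarith
  · rw [abs_of_nonpos hx0] at hxle ⊢
    have hz0 : z ≤ 0 := by linarith [(abs_le.1 hxle).2]
    rw [abs_of_nonpos hz0] at hzle
    have hlo : 2 * x ≤ RN z := h.le_apply hdouble (by linarith [(abs_le.1 hxle).1])
    have hhi : RN z ≤ x / 2 := h.apply_le hhalf (by linarith [(abs_le.1 hzle).2])
    rw [abs_of_nonpos (by linarith : RN z ≤ 0)]
    constructor <;> rw [abs_le] <;> constructor <;> linarith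

lemma apply_add_of_abs_add_le (h : IsRN p RN) (hp : 1 ≤ p) (hx : x ∈ Fp p) (hy : y ∈ Fp p)
    (hyx : |y| ≤ |x|) (hle : |x + y| ≤ |y|) : RN (x + y) = x + y := by
  refine h.eq_self ?_
  rw [← sub_neg_eq_add] at hle ⊢
  exact Fp.sub_mem_of_abs_sub_le hp hx (Fp.neg_mem hy) (hle.trans hyx) (by rwa [abs_neg])

lemma apply_add_sub_mem (h : IsRN p RN) (hp : 1 ≤ p) (hx : x ∈ Fp p) (hy : y ∈ Fp p)
    (hyx : |y| ≤ |x|) : RN (x + y) - x ∈ Fp p := by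
  rcases le_total |y| |x + y| with hle | hle
  · exact h.apply_sub_mem_of_abs_sub_le hp hx (by simpa) (by simpa)
  · simpa [h.apply_add_of_abs_add_le hp hx hy hyx hle]

lemma fastTwoSumLow_eq (h : IsRN p RN) (hp : 1 ≤ p) (hx : x ∈ Fp p) (hy : y ∈ Fp p)
    (hyx : |y| ≤ |x|) : fastTwoSumLow RN x y = x + y - RN (x + y) := by
  rw [fastTwoSumLow, h.eq_self (h.apply_add_sub_mem hp hx hy hyx), sub_sub_eq_add_sub, add_comm y x,
    h.eq_self (h.add_sub_apply_mem hp hx hy)]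

lemma twoSumLow_of_abs_le (h : IsRN p RN) (hp : 1 ≤ p) (hx : x ∈ Fp p) (hy : y ∈ Fp p)
    (hxy : |x| ≤ |y|) : twoSumLow RN x y = x + y - RN (x + y) := by
  have herr := h.eq_self (h.add_sub_apply_mem hp hx hy)
  have ha : RN (x + y) - y ∈ Fp p := by
    simpa only [add_comm x y] using h.apply_add_sub_mem hp hy hx hxy
  simp only [twoSumLow, h.eq_self ha, sub_sub_cancel, h.eq_self hy, sub_self, h.apply_zero,
    add_zero, sub_sub_eq_add_sub, herr]

-- Shewchuk's argument: the second and third operations are FastTwoSum of `s` and `-y`.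
lemma twoSumLow_of_abs_le_abs_apply (h : IsRN p RN) (hp : 2 ≤ p) (hx : x ∈ Fp p) (hy : y ∈ Fp p)
    (hyx : |y| ≤ |x|) (hys : |y| ≤ |RN (x + y)|) :
    twoSumLow RN x y = x + y - RN (x + y) := by
  have hp1 : 1 ≤ p := by omega
  have herr := h.eq_self (h.add_sub_apply_mem hp1 hx hy)
  have herr_le : |RN (x + y) - y - x| ≤ |x| / 2 := by
    have hrel := h.abs_sub_le_abs_mul hp1 (x + y)
    rw [← sub_sub, sub_right_comm] at hrel
    have hu := unitRoundoff_le_quarter hp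
    nlinarith [abs_add_le x y, abs_nonneg (x + y)]
  simp only [twoSumLow]
  set s := RN (x + y)
  have hs : s ∈ Fp p := h.mem _
  set a := RN (s - y) with ha
  rw [← abs_neg y] at hys
  have hb : s - a ∈ Fp p := by
    simpa only [neg_sub, ← sub_eq_add_neg] using
      Fp.neg_mem (h.apply_add_sub_mem hp1 hs (Fp.neg_mem hy) hys)
  have hyb : y - (s - a) ∈ Fp p := by
    have := Fp.neg_mem (h.add_sub_apply_mem hp1 hs (Fp.neg_mem hy))
    rwa [← sub_eq_add_neg, ← ha, sub_right_comm, neg_sub] at this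
  have hxa : x - a ∈ Fp p := by
    have hle : |x| - |s - y| ≤ |s - y - x| := abs_sub_comm x _ ▸ abs_sub_abs_le_abs_sub x (s - y)
    rw [← neg_sub]
    exact Fp.neg_mem (h.apply_sub_mem_of_abs_sub_le hp1 hx (by linarith [abs_nonneg x])
      (by linarith))
  rw [h.eq_self hb, h.eq_self hyb, h.eq_self hxa, show x - a + (y - (s - a)) = x + y - s by ring,
    herr]

lemma twoSumLow_eq (h : IsRN p RN) (hp : 2 ≤ p) (hx : x ∈ Fp p) (hy : y ∈ Fp p) :
    twoSumLow RN x y = x + y - RN (x + y) := by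
  have hp1 : 1 ≤ p := by omega
  rcases le_total |x| |y| with hxy | hyx
  · exact h.twoSumLow_of_abs_le hp1 hx hy hxy
  rcases le_or_gt |y| |RN (x + y)| with hys | hsy
  · exact h.twoSumLow_of_abs_le_abs_apply hp hx hy hyx hys
  have hle : |x + y| ≤ |y| :=
    le_of_not_ge fun hle => (h.le_abs_apply (Fp.abs_mem hy) hle).not_gt hsy
  have hexact : RN (x + y) = x + y := h.apply_add_of_abs_add_le hp1 hx hy hyx hle
  simp only [twoSumLow, hexact, add_sub_cancel_right, h.eq_self hx, add_sub_cancel_left,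
    h.eq_self hy, sub_self, add_zero, h.apply_zero]

end IsRN

/-! ### The low word of the sloppy sum -/

/-- The word `w` of sloppy addition as a function of `z = x_h + y_h` and `q = x_l + y_l`, with
`s_l` replaced by the exact error `z - RN z` that it computes. -/
noncomputable def sloppyLow (RN : ℝ → ℝ) (z q : ℝ) : ℝ := RN (z - RN z + RN q)

namespace IsRN

variable {RN : ℝ → ℝ} {a l m q s t x y z : ℝ}

lemma sloppyAdd_eq (h : IsRN p RN) (hp : 2 ≤ p) (hx : x ∈ Fp p) (hy : y ∈ Fp p) (l m : ℝ) :
    sloppyAdd RN x l y m =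
      (RN (RN (x + y) + sloppyLow RN (x + y) (l + m)),
        fastTwoSumLow RN (RN (x + y)) (sloppyLow RN (x + y) (l + m))) := by
  rw [sloppyLow, ← h.twoSumLow_eq hp hx hy]
  rfl

lemma sloppyAdd_comm (h : IsRN p RN) (hp : 2 ≤ p) (hx : x ∈ Fp p) (hy : y ∈ Fp p) (l m : ℝ) :
    sloppyAdd RN x l y m = sloppyAdd RN y m x l := by
  rw [h.sloppyAdd_eq hp hx hy, h.sloppyAdd_eq hp hy hx, add_comm x, add_comm l]

lemma sloppyAdd_fst_add_snd (h : IsRN p RN) (hp : 2 ≤ p) (hx : x ∈ Fp p) (hy : y ∈ Fp p)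
    (hle : |sloppyLow RN (x + y) (l + m)| ≤ |RN (x + y)|) :
    (sloppyAdd RN x l y m).1 + (sloppyAdd RN x l y m).2 =
      RN (x + y) + sloppyLow RN (x + y) (l + m) := by
  have hfast := h.fastTwoSumLow_eq (by omega) (h.mem (x + y)) (h.mem _) hle
  rw [h.sloppyAdd_eq hp hx hy]
  exact (congrArg _ hfast).trans (add_sub_cancel _ _)

lemma abs_low_le (h : IsRN p RN) (hp : 1 ≤ p) (ht : IsPowTwo t) (hl : RN (a + l) = a)
    (ha : |a| < 2 * t) : |l| ≤ t * unitRoundoff p := by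
  have hal : |a + l| ≤ 2 * t := by
    by_contra! hlt
    have := h.le_abs_apply (Fp.isPowTwo_mem hp ht.two_mul) hlt.le
    rw [hl] at this
    exact this.not_gt ha
  calc |l| = |RN (a + l) - (a + l)| := by rw [hl, sub_add_cancel_left, abs_neg]
    _ ≤ 2 * t * unitRoundoff p / 2 := h.abs_sub_le hp ht.two_mul hal
    _ = t * unitRoundoff p := by ring

lemma abs_add_sloppyLow_sub_le (h : IsRN p RN) (hp : 1 ≤ p) (hs : IsPowTwo s) (ht : IsPowTwo t)
    (hq : |q| ≤ s) (hw : |z - RN z + RN q| ≤ t) :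
    |RN z + sloppyLow RN z q - (z + q)| ≤ (s + t) * unitRoundoff p / 2 := by
  have hsplit : RN z + sloppyLow RN z q - (z + q) =
      (RN q - q) + (RN (z - RN z + RN q) - (z - RN z + RN q)) := by
    rw [sloppyLow]
    ring
  calc |RN z + sloppyLow RN z q - (z + q)|
      ≤ |RN q - q| + |RN (z - RN z + RN q) - (z - RN z + RN q)| := hsplit ▸ abs_add_le _ _
    _ ≤ s * unitRoundoff p / 2 + t * unitRoundoff p / 2 :=
        add_le_add (h.abs_sub_le hp hs hq) (h.abs_sub_le hp ht hw)
    _ = (s + t) * unitRoundoff p / 2 := by ring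

lemma sloppyLow_bounds_of_le_abs (h : IsRN p RN) (hp : 2 ≤ p) (ht : IsPowTwo t) (htz : t ≤ |z|)
    (hzt : |z| ≤ 4 * t) (hq : |q| ≤ 2 * (t * unitRoundoff p)) :
    |sloppyLow RN z q| ≤ |RN z| ∧
      |RN z + sloppyLow RN z q - (z + q)| ≤ 3 * unitRoundoff p ^ 2 * t := by
  have hp1 : 1 ≤ p := by omega
  have htu : IsPowTwo (t * unitRoundoff p) := ht.mul_unitRoundoff p
  have hsum : |z - RN z + RN q| ≤ 2 * (2 * (t * unitRoundoff p)) := by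
    have herr := h.abs_sub_le hp1 ht.two_mul.two_mul (x := z) (by linarith)
    have hv := h.abs_apply_le (Fp.isPowTwo_mem hp1 htu.two_mul) hq
    rw [abs_sub_comm] at herr
    linarith [abs_add_le (z - RN z) (RN q)]
  constructor
  · calc |sloppyLow RN z q| ≤ 2 * (2 * (t * unitRoundoff p)) :=
          h.abs_apply_le (Fp.isPowTwo_mem hp1 htu.two_mul.two_mul) hsum
      _ ≤ t := by nlinarith [unitRoundoff_le_quarter hp, ht.pos]
      _ ≤ |RN z| := h.le_abs_apply (Fp.isPowTwo_mem hp1 ht) htz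
  · refine (h.abs_add_sloppyLow_sub_le hp1 htu.two_mul htu.two_mul.two_mul hq hsum).trans_eq ?_
    ring

lemma abs_sub_apply_add_apply_le (h : IsRN p RN) (hp : 2 ≤ p) (ht : IsPowTwo t) (hzt : |z| ≤ t)
    (hq : |q| ≤ 3 / 2 * (t * unitRoundoff p)) :
    |z - RN z + RN q| ≤ 2 * (t * unitRoundoff p) := by
  have hp1 : 1 ≤ p := by omega
  have htu : IsPowTwo (t * unitRoundoff p) := ht.mul_unitRoundoff p
  have hmem : 3 / 2 * (t * unitRoundoff p) ∈ Fp p := by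
    refine Fp.mem_of_mem_zmultiples hp1 htu.half
      (AddSubgroup.mem_zmultiples_iff.2 ⟨3, by rw [zsmul_eq_mul]; push_cast; ring⟩) ?_
    rw [abs_of_pos (mul_pos (by norm_num) htu.pos)]
    nlinarith [unitRoundoff_le_quarter hp, htu.pos]
  have herr := h.abs_sub_le hp1 ht hzt
  rw [abs_sub_comm] at herr
  linarith [abs_add_le (z - RN z) (RN q), h.abs_apply_le hmem hq]

lemma abs_sloppyLow_le_abs_apply (h : IsRN p RN) (hp : 2 ≤ p) (ht : IsPowTwo t)
    (htz : t / 2 ≤ |z|) (hzt : |z| ≤ t) (hq : |q| ≤ 3 / 2 * (t * unitRoundoff p)) :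
    |sloppyLow RN z q| ≤ |RN z| := by
  have hp1 : 1 ≤ p := by omega
  calc |sloppyLow RN z q| ≤ 2 * (t * unitRoundoff p) :=
        h.abs_apply_le (Fp.isPowTwo_mem hp1 (ht.mul_unitRoundoff p).two_mul)
          (h.abs_sub_apply_add_apply_le hp ht hzt hq)
    _ ≤ t / 2 := by nlinarith [unitRoundoff_le_quarter hp, ht.pos]
    _ ≤ |RN z| := h.le_abs_apply (Fp.isPowTwo_mem hp1 ht.half) htz

lemma abs_add_sloppyLow_sub_le_two_mul (h : IsRN p RN) (hp : 2 ≤ p) (ht : IsPowTwo t)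
    (hzt : |z| ≤ t) (hq : |q| ≤ 3 / 2 * (t * unitRoundoff p)) :
    |RN z + sloppyLow RN z q - (z + q)| ≤ 2 * unitRoundoff p ^ 2 * t := by
  have htu : IsPowTwo (t * unitRoundoff p) := ht.mul_unitRoundoff p
  refine (h.abs_add_sloppyLow_sub_le (by omega) htu.two_mul htu.two_mul
    (by linarith [htu.pos]) (h.abs_sub_apply_add_apply_le hp ht hzt hq)).trans_eq ?_
  ring

-- Either `q` is small and the error of `v` halves, or `v` is so large that `s_l + v` is a float.
lemma abs_add_sloppyLow_sub_le_of_mem_zmultiples (h : IsRN p RN) (hp : 2 ≤ p) (ht : IsPowTwo t)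
    (hzt : |z| ≤ t) (hq : |q| ≤ 3 / 2 * (t * unitRoundoff p))
    (hz : z ∈ zmultiples (2 * (t * unitRoundoff p) * unitRoundoff p)) :
    |RN z + sloppyLow RN z q - (z + q)| ≤ 3 / 2 * unitRoundoff p ^ 2 * t := by
  have hp1 : 1 ≤ p := by omega
  have htu : IsPowTwo (t * unitRoundoff p) := ht.mul_unitRoundoff p
  have hsum := h.abs_sub_apply_add_apply_le hp ht hzt hq
  rcases le_total |q| (t * unitRoundoff p) with hqle | hqge
  · refine (h.abs_add_sloppyLow_sub_le hp1 htu htu.two_mul hqle hsum).trans_eq ?_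
    ring
  · have hgrid : IsPowTwo (2 * (t * unitRoundoff p) * unitRoundoff p) :=
      htu.two_mul.mul_unitRoundoff p
    have hv : RN q ∈ zmultiples (2 * (t * unitRoundoff p) * unitRoundoff p) :=
      Fp.mem_zmultiples_of_le_abs htu (h.mem q) (h.le_abs_apply (Fp.isPowTwo_mem hp1 htu) hqge)
    have hmem : z - RN z + RN q ∈ Fp p :=
      Fp.mem_of_mem_zmultiples hp1 hgrid
        (add_mem (sub_mem hz (h.apply_mem_zmultiples hp1 hgrid hz)) hv)
        (mul_le_mul_of_nonneg_right hsum (unitRoundoff_pos p).le)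
    have hverr := h.abs_sub_le hp1 htu.two_mul (x := q) (by linarith [htu.pos])
    rw [sloppyLow, h.eq_self hmem, show RN z + (z - RN z + RN q) - (z + q) = RN q - q by ring]
    nlinarith [mul_pos htu.pos (unitRoundoff_pos p)]

lemma sloppyLow_bounds_of_le_abs_add (h : IsRN p RN) (hp : 2 ≤ p) (ht : IsPowTwo t)
    (hl : RN (x + l) = x) (hm : RN (y + m) = y) (hyx : |y| ≤ |x|) (hxt : |x| < 2 * t)
    (htz : t ≤ |x + y|) :
    |sloppyLow RN (x + y) (l + m)| ≤ |RN (x + y)| ∧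
      |RN (x + y) + sloppyLow RN (x + y) (l + m) - (x + y + (l + m))| ≤
        3 * unitRoundoff p ^ 2 * |x + y| ∧
      |l + m| ≤ 3 * unitRoundoff p * |x + y| := by
  have hp1 : 1 ≤ p := by omega
  have hu := unitRoundoff_pos p
  have hq : |l + m| ≤ 2 * (t * unitRoundoff p) := by
    have hl' := h.abs_low_le hp1 ht hl hxt
    have hm' := h.abs_low_le hp1 ht hm (hyx.trans_lt hxt)
    linarith [abs_add_le l m]
  obtain ⟨hw, herr⟩ :=
    h.sloppyLow_bounds_of_le_abs hp ht htz (by linarith [abs_add_le x y]) hq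
  exact ⟨hw, herr.trans (by gcongr), by nlinarith [mul_pos hu ht.pos]⟩

lemma sloppyLow_bounds_of_abs_add_lt (h : IsRN p RN) (hp : 2 ≤ p) (ht : IsPowTwo t)
    (hx : x ∈ Fp p) (hy : y ∈ Fp p) (hl : RN (x + l) = x) (hm : RN (y + m) = y)
    (hyx : |y| ≤ |x| / 2) (htx : t ≤ |x|) (hxt : |x| < 2 * t) (hzt : |x + y| < t) :
    |sloppyLow RN (x + y) (l + m)| ≤ |RN (x + y)| ∧
      |RN (x + y) + sloppyLow RN (x + y) (l + m) - (x + y + (l + m))| ≤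
        3 * unitRoundoff p ^ 2 * |x + y| ∧
      |l + m| ≤ 3 * unitRoundoff p * |x + y| := by
  have hp1 : 1 ≤ p := by omega
  have hu := unitRoundoff_pos p
  have hu4 := unitRoundoff_le_quarter hp
  have hz : |x| - |y| ≤ |x + y| := abs_sub_abs_le_abs_add x y
  have hq : |l + m| ≤ 3 / 2 * (t * unitRoundoff p) := by
    have hl' := h.abs_low_le hp1 ht hl hxt
    have hm' := h.abs_low_le hp1 ht.half hm (by linarith)
    linarith [abs_add_le l m]
  refine ⟨h.abs_sloppyLow_le_abs_apply hp ht (by linarith) hzt.le hq, ?_, ?_⟩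
  · rcases le_or_gt (t / 4) |y| with hty | hyt
    · have hgrid : ∀ f ∈ Fp p, t / 4 ≤ |f| →
          f ∈ zmultiples (2 * (t * unitRoundoff p) * unitRoundoff p) := fun f hf htf => by
        have ht4 : IsPowTwo (t / 4) := ht.div ⟨2, by norm_num⟩
        refine IsPowTwo.zmultiples_le_zmultiples
          ((ht.mul_unitRoundoff p).two_mul.mul_unitRoundoff p)
          (ht4.two_mul.mul_unitRoundoff p) ?_ (Fp.mem_zmultiples_of_le_abs ht4 hf htf)
        nlinarith [mul_pos ht.pos hu]
      have hsum := add_mem (hgrid x hx (by linarith [ht.pos])) (hgrid y hy hty)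
      refine (h.abs_add_sloppyLow_sub_le_of_mem_zmultiples hp ht hzt.le hq hsum).trans ?_
      nlinarith [pow_pos hu 2]
    · refine (h.abs_add_sloppyLow_sub_le_two_mul hp ht hzt.le hq).trans ?_
      nlinarith [pow_pos hu 2]
  · nlinarith

lemma sloppyLow_bounds (h : IsRN p RN) (hp : 2 ≤ p) (hx : x ∈ Fp p) (hy : y ∈ Fp p)
    (hl : RN (x + l) = x) (hm : RN (y + m) = y) (hyx : |y| ≤ |x|)
    (hr : x * y < 0 → |y| ≤ |x| / 2) :
    |sloppyLow RN (x + y) (l + m)| ≤ |RN (x + y)| ∧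
      |RN (x + y) + sloppyLow RN (x + y) (l + m) - (x + y + (l + m))| ≤
        3 * unitRoundoff p ^ 2 * |x + y| ∧
      |l + m| ≤ 3 * unitRoundoff p * |x + y| := by
  have hp1 : 1 ≤ p := by omega
  rcases eq_or_ne x 0 with rfl | hx0
  · obtain rfl : y = 0 := abs_nonpos_iff.1 (hyx.trans_eq abs_zero)
    obtain rfl : l = 0 := h.eq_zero_of_apply_eq_zero hp1 (by simpa using hl)
    obtain rfl : m = 0 := h.eq_zero_of_apply_eq_zero hp1 (by simpa using hm)
    simp [sloppyLow, h.apply_zero]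
  obtain ⟨t, ht, htx, hxt⟩ := exists_isPowTwo_le_abs_lt hx0
  rcases le_or_gt t |x + y| with htz | hzt
  · exact h.sloppyLow_bounds_of_le_abs_add hp ht hl hm hyx hxt htz
  have hxy : x * y < 0 := by
    by_contra! hxy
    have : |x| ≤ |x + y| := sq_le_sq.1 (by nlinarith [sq_nonneg y])
    linarith
  exact h.sloppyLow_bounds_of_abs_add_lt hp ht hx hy hl hm (hr hxy) htx hxt hzt

end IsRN

lemma three_mul_sq_mul_abs_le {u z q : ℝ} (hu0 : 0 ≤ u) (hu : u ≤ 1 / 4)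
    (hq : |q| ≤ 3 * u * |z|) : 3 * u ^ 2 * |z| ≤ (3 * u ^ 2 + 36 * u ^ 3) * |z + q| := by
  have hzq : (1 - 3 * u) * |z| ≤ |z + q| := by linarith [abs_sub_abs_le_abs_add z q]
  have hcoeff : 3 * u ^ 2 ≤ (3 * u ^ 2 + 36 * u ^ 3) * (1 - 3 * u) := by
    have : 0 ≤ 27 * u ^ 3 * (1 - 4 * u) := mul_nonneg (by positivity) (by linarith)
    linarith
  calc 3 * u ^ 2 * |z| ≤ (3 * u ^ 2 + 36 * u ^ 3) * (1 - 3 * u) * |z| := by gcongr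
    _ = (3 * u ^ 2 + 36 * u ^ 3) * ((1 - 3 * u) * |z|) := by ring
    _ ≤ (3 * u ^ 2 + 36 * u ^ 3) * |z + q| := by gcongr

-- The hypothesis `hr` is `r (xh, yh) ≤ 1 / 2` in the paper's notation.
theorem sloppy_relerr_three_u_sq_of_mild_cancellation_general (hp : 2 ≤ p) {RN : ℝ → ℝ}
    (h : IsRN p RN) {xh xl yh yl : ℝ} (hxh : xh ∈ Fp p) (hyh : yh ∈ Fp p)
    (hx : RN (xh + xl) = xh) (hy : RN (yh + yl) = yh)
    (hr : xh * yh < 0 → min |xh| |yh| ≤ max |xh| |yh| / 2) :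
    |(sloppyAdd RN xh xl yh yl).1 + (sloppyAdd RN xh xl yh yl).2 - (xh + xl + yh + yl)| ≤
      (3 * unitRoundoff p ^ 2 + 36 * unitRoundoff p ^ 3) * |xh + xl + yh + yl| := by
  wlog hle : |yh| ≤ |xh| generalizing xh xl yh yl
  · have := this hyh hxh hy hx (by rwa [mul_comm, min_comm, max_comm]) (le_of_not_ge hle)
    rwa [h.sloppyAdd_comm hp hyh hxh, add_assoc (yh + yl), add_comm (yh + yl), ← add_assoc] at this
  rw [min_eq_right hle, max_eq_left hle] at hr
  obtain ⟨hw, herr, hq⟩ := h.sloppyLow_bounds hp hxh hyh hx hy hle hr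
  rw [h.sloppyAdd_fst_add_snd hp hxh hyh hw, add_assoc (xh + xl), add_add_add_comm]
  exact herr.trans
    (three_mul_sq_mul_abs_le (unitRoundoff_pos p).le (unitRoundoff_le_quarter hp) hq)

theorem sloppy_relerr_three_u_sq_of_mild_cancellation :
    ∃ C : ℝ, 0 ≤ C ∧
      ∀ (p : ℕ), 6 ≤ p → ∀ RN : ℝ → ℝ, IsRN p RN → SymRN RN →
        ∀ xh xl yh yl : ℝ, xh ∈ Fp p → xl ∈ Fp p → yh ∈ Fp p → yl ∈ Fp p →
          RN (xh + xl) = xh → RN (yh + yl) = yh → xh * yh < 0 →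
          min |xh| |yh| ≤ max |xh| |yh| / 2 →
          |(sloppyAdd RN xh xl yh yl).1 + (sloppyAdd RN xh xl yh yl).2 -
              (xh + xl + yh + yl)| ≤
            (3 * ((2 : ℝ) ^ (-(p : ℤ))) ^ 2 + C * ((2 : ℝ) ^ (-(p : ℤ))) ^ 3) *
              |xh + xl + yh + yl| :=
  ⟨36, by norm_num, fun _ hp _ h _ _ _ _ _ hxh _ hyh _ hx hy _ hmin =>
    sloppy_relerr_three_u_sq_of_mild_cancellation_general (by omega) h hxh hyh hx hy fun _ => hmin⟩
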